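/- For the full shift T on X = ∏_{n∈ℤ} M over a perfect Polish metric space M, for every L > 0 the set {μ ∈ M_e : h_μ(T) ≥ L} of ergodic invariant measures with entropy at least L is dense in M_e (with the topology induced from the weak topology on M(T)). -/

import Mathlib

open Filter MeasureTheory Topology Metric Set
open scoped ENNReal NNReal

noncomputable section
attribute [local instance] Classical.propDecidable

/-- The full (bilateral) shift on the product space `ℤ → M`: `(T x) i = x (i - 1)`. -/
def fullShift {M : Type*} (x : ℤ → M) : ℤ → M := fun i => x (i - 1)

/-- The metric `d(x,y) = ∑_{n ∈ ℤ} 2^{-|n|} ρ(xₙ,yₙ)/(1 + ρ(xₙ,yₙ))` on `ℤ → M`,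
compatible with the product topology. -/
def shiftDist {M : Type*} [MetricSpace M] (x y : ℤ → M) : ℝ :=
  ∑' n : ℤ, (1 / 2 : ℝ) ^ n.natAbs * (dist (x n) (y n) / (1 + dist (x n) (y n)))

/-- Lower local dimension `d̲_μ(x) = liminf_{ε → 0⁺} log μ(B(x,ε)) / log ε` of `μ` at `x`,
with respect to the distance function `d`; by convention it is `∞` if some ball
centered at `x` has measure zero. -/
def lowerLocalDim {X : Type*} [MeasurableSpace X] (d : X → X → ℝ)
    (μ : Measure X) (x : X) : ℝ≥0∞ :=
  if ∃ ε > 0, μ {y | d x y < ε} = 0 then ⊤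
  else liminf (fun ε : ℝ =>
    ENNReal.ofReal (Real.log (μ {y | d x y < ε}).toReal / Real.log ε)) (𝓝[>] (0 : ℝ))

/-- Upper local dimension `d̄_μ(x) = limsup_{ε → 0⁺} log μ(B(x,ε)) / log ε`. -/
def upperLocalDim {X : Type*} [MeasurableSpace X] (d : X → X → ℝ)
    (μ : Measure X) (x : X) : ℝ≥0∞ :=
  if ∃ ε > 0, μ {y | d x y < ε} = 0 then ⊤
  else limsup (fun ε : ℝ =>
    ENNReal.ofReal (Real.log (μ {y | d x y < ε}).toReal / Real.log ε)) (𝓝[>] (0 : ℝ))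

/-- The ratio `log τ_r(x) / (- log r)`, where `τ_r(x) = inf {n ≥ 1 | Tⁿ x ∈ B̄(x,r)}` is the
first return time of `x` to the closed ball `B̄(x,r)`; by convention it is `∞` when the
return time is infinite. -/
def recRatio {X : Type*} (d : X → X → ℝ) (T : X → X) (x : X) (r : ℝ) : ℝ≥0∞ :=
  if ∃ n : ℕ, 1 ≤ n ∧ d (T^[n] x) x ≤ r then
    ENNReal.ofReal
      (Real.log ((sInf {n : ℕ | 1 ≤ n ∧ d (T^[n] x) x ≤ r} : ℕ) : ℝ) / (- Real.log r))
  else ⊤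

/-- Lower recurrence rate `R̲(x) = liminf_{r → 0⁺} log τ_r(x) / (- log r)`. -/
def lowerRecRate {X : Type*} (d : X → X → ℝ) (T : X → X) (x : X) : ℝ≥0∞ :=
  liminf (recRatio d T x) (𝓝[>] (0 : ℝ))

/-- Upper recurrence rate `R̄(x) = limsup_{r → 0⁺} log τ_r(x) / (- log r)`. -/
def upperRecRate {X : Type*} (d : X → X → ℝ) (T : X → X) (x : X) : ℝ≥0∞ :=
  limsup (recRatio d T x) (𝓝[>] (0 : ℝ))

/-- The ratio `log τ_r(x,y) / (- log r)`, where `τ_r(x,y) = inf {n ≥ 1 | Tⁿ x ∈ B̄(y,r)}` is the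
first entrance time of the orbit of `x` into the closed ball `B̄(y,r)`; by convention `∞`
when the entrance time is infinite. -/
def waitRatio {X : Type*} (d : X → X → ℝ) (T : X → X) (x y : X) (r : ℝ) : ℝ≥0∞ :=
  if ∃ n : ℕ, 1 ≤ n ∧ d (T^[n] x) y ≤ r then
    ENNReal.ofReal
      (Real.log ((sInf {n : ℕ | 1 ≤ n ∧ d (T^[n] x) y ≤ r} : ℕ) : ℝ) / (- Real.log r))
  else ⊤

/-- Lower quantitative waiting time indicator `R̲(x,y)`. -/
def lowerWaitRate {X : Type*} (d : X → X → ℝ) (T : X → X) (x y : X) : ℝ≥0∞ :=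
  liminf (waitRatio d T x y) (𝓝[>] (0 : ℝ))

/-- Upper quantitative waiting time indicator `R̄(x,y)`. -/
def upperWaitRate {X : Type*} (d : X → X → ℝ) (T : X → X) (x y : X) : ℝ≥0∞ :=
  limsup (waitRatio d T x y) (𝓝[>] (0 : ℝ))

/-- The entropy `H(P) = ∑_c -μ(P_c) log μ(P_c)` of the finite measurable partition
`P_c = f ⁻¹ {c}` of `X` induced by a map `f` into a finite set. -/
def partitionEntropy {X F : Type*} [MeasurableSpace X] [Fintype F]
    (μ : Measure X) (f : X → F) : ℝ :=
  ∑ c : F, Real.negMulLog ((μ (f ⁻¹' {c})).toReal)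

/-- The Kolmogorov–Sinai (measure-theoretic) entropy `h_μ(T)`: the supremum, over all finite
measurable partitions (coded by measurable maps `f : X → Fin k`), of the limit of
`H(⋁_{i<n} T⁻ⁱ P) / n`. -/
def kolmogorovSinaiEntropy {X : Type*} [MeasurableSpace X] (T : X → X) (μ : Measure X) :
    ℝ≥0∞ :=
  ⨆ (k : ℕ) (f : X → Fin k) (_ : Measurable f),
    ENNReal.ofReal
      (liminf (fun n : ℕ =>
        partitionEntropy μ (fun x (i : Fin n) => f (T^[(i : ℕ)] x)) / n) atTop)

end

/-!
Couple `μ` with an independent uniform Bernoulli sequence, and use the `i`-th symbol of that noise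
to move the `i`-th coordinate by less than `ε`. Since every ball of a perfect space is infinite,
this can be done so that the symbol is recovered from the moved coordinate alone. The perturbed
measure then has the Bernoulli shift as a factor, so its entropy is at least that of the noise, and
it tends to `μ` weakly as `ε → 0`.

The perturbed measure is ergodic because it is a factor of the product of an ergodic and a mixing
system, and such a product is ergodic: for an invariant set `A`, the mean absolute covariance of the
slices of `A` with a fixed set equals that of their `n`-th preimages, which tends to `0` by mixing.
Hence almost every slice is independent of that set, and `A` is independent of itself.
-/

open ProbabilityTheory

section SetwiseConvergence

variable {X ι : Type*} [m : MeasurableSpace X]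

theorem tendsto_measureReal_of_isPiSystem {ρ : ι → Measure X} {ρ' ν : Measure X}
    [IsFiniteMeasure ρ'] [IsFiniteMeasure ν] {l : Filter ι} {C : Set (Set X)}
    (hle : ∀ i, ρ i ≤ ν) (hgen : m = .generateFrom C) (hC : IsPiSystem C)
    (huniv : Tendsto (fun i => (ρ i).real univ) l (𝓝 (ρ'.real univ)))
    (hbasic : ∀ s ∈ C, Tendsto (fun i => (ρ i).real s) l (𝓝 (ρ'.real s)))
    {s : Set X} (hs : MeasurableSet s) :
    Tendsto (fun i => (ρ i).real s) l (𝓝 (ρ'.real s)) := by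
  have hfin (i : ι) : IsFiniteMeasure (ρ i) := isFiniteMeasure_of_le ν (hle i)
  induction s, hs using MeasurableSpace.induction_on_inter hgen hC with
  | empty => simp only [measureReal_empty, tendsto_const_nhds]
  | basic s hs => exact hbasic s hs
  | compl s hs ih => simpa only [measureReal_compl hs] using huniv.sub ih
  | iUnion f hd hf ih =>
    have hsum (κ : Measure X) [IsFiniteMeasure κ] : κ.real (⋃ j, f j) = ∑' j, κ.real (f j) := by
      simp only [measureReal_def, measure_iUnion hd hf,
        ENNReal.tsum_toReal_eq fun j => measure_ne_top κ (f j)]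
    simp only [hsum]
    refine tendsto_tsum_of_dominated_convergence (bound := fun j => ν.real (f j))
      (summable_measure_toReal hf hd) ih (.of_forall fun i j => ?_)
    rw [Real.norm_of_nonneg measureReal_nonneg]
    exact ENNReal.toReal_mono (measure_ne_top ν _) (hle i _)

end SetwiseConvergence

section Mixing

variable {X : Type*} [m : MeasurableSpace X] {f : X → X} {μ : Measure X}

/-- A measure-preserving map `f` is (strongly) mixing if every measurable set `s` is asymptotically
independent of the preimages `f^[n] ⁻¹' t` of every measurable set `t`. -/
structure IsMixing (f : X → X) (μ : Measure X) : Prop extends MeasurePreserving f μ μ where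
  tendsto_measureReal_inter_preimage_iterate {s t : Set X} :
    MeasurableSet s → MeasurableSet t →
      Tendsto (fun n => μ.real (s ∩ f^[n] ⁻¹' t)) atTop (𝓝 (μ.real s * μ.real t))

theorem IsMixing.of_isPiSystem [IsProbabilityMeasure μ] (hf : MeasurePreserving f μ μ)
    {C : Set (Set X)} (hgen : m = .generateFrom C) (hC : IsPiSystem C)
    (hmix : ∀ s ∈ C, ∀ t ∈ C,
      Tendsto (fun n => μ.real (s ∩ f^[n] ⁻¹' t)) atTop (𝓝 (μ.real s * μ.real t))) :
    IsMixing f μ where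
  toMeasurePreserving := hf
  tendsto_measureReal_inter_preimage_iterate {s t} hs ht := by
    have hCm {a : Set X} (ha : a ∈ C) : MeasurableSet a :=
      hgen ▸ MeasurableSpace.measurableSet_generateFrom ha
    have hfn (n : ℕ) : Measurable f^[n] := (hf.iterate n).measurable
    have hlim (a b : Set X) : ((μ a).toNNReal • μ).real b = μ.real a * μ.real b :=
      measureReal_nnreal_smul_apply _
    have hmix_left {a : Set X} (ha : a ∈ C) :
        Tendsto (fun n => μ.real (a ∩ f^[n] ⁻¹' t)) atTop (𝓝 (μ.real a * μ.real t)) := by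
      have hρ (n : ℕ) {b : Set X} (hb : MeasurableSet b) :
          ((μ.restrict a).map f^[n]).real b = μ.real (a ∩ f^[n] ⁻¹' b) := by
        rw [map_measureReal_apply (hfn n) hb, inter_comm, measureReal_restrict_apply (hfn n hb)]
      simp only [← hρ _ ht, ← hlim]
      refine tendsto_measureReal_of_isPiSystem (ν := μ) (fun n => ?_) hgen hC ?_ (fun b hb => ?_) ht
      · exact (Measure.map_mono Measure.restrict_le_self (hfn n)).trans_eq (hf.iterate n).map_eq
      · simp [hρ _ .univ, hlim]
      · simpa only [hρ _ (hCm hb), hlim] using hmix a ha b hb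
    have hρ (n : ℕ) {a : Set X} (ha : MeasurableSet a) :
        (μ.restrict (f^[n] ⁻¹' t)).real a = μ.real (a ∩ f^[n] ⁻¹' t) :=
      measureReal_restrict_apply ha
    simp only [← hρ _ hs, mul_comm (μ.real s), ← hlim]
    refine tendsto_measureReal_of_isPiSystem (ν := μ) (fun n => Measure.restrict_le_self) hgen hC
      ?_ (fun a ha => ?_) hs
    · simp [(hf.iterate _).measureReal_preimage ht.nullMeasurableSet, hlim]
    · simpa only [hρ _ (hCm ha), hlim, mul_comm] using hmix_left ha

end Mixing

section Product

variable {X Y : Type*} [MeasurableSpace X] [MeasurableSpace Y] {T : X → X} {S : Y → Y}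
  {μ : Measure X} {ν : Measure Y} {A : Set (X × Y)}

theorem measureReal_prod_eq_integral [IsFiniteMeasure ν] (hA : MeasurableSet A) :
    (μ.prod ν).real A = ∫ x, ν.real (Prod.mk x ⁻¹' A) ∂μ := by
  rw [measureReal_def, Measure.prod_apply hA, ← integral_toReal]
  · rfl
  · exact (measurable_measure_prodMk_left hA).aemeasurable
  · exact .of_forall fun x => measure_lt_top _ _

theorem measureReal_prod_inter_prod_eq_setIntegral [SFinite μ] [IsFiniteMeasure ν]
    (hA : MeasurableSet A) (U : Set X) (V : Set Y) :
    (μ.prod ν).real (A ∩ U ×ˢ V) = ∫ x in U, ν.real (Prod.mk x ⁻¹' A ∩ V) ∂μ := by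
  rw [← measureReal_restrict_apply hA, ← Measure.prod_restrict, measureReal_prod_eq_integral hA]
  simp only [measureReal_restrict_apply (measurable_prodMk_left hA)]

/-- The covariance under `ν` of the indicators of `V` and of the preimage under `S^[n]` of the slice
of `A` over `x`; it measures how far the two sets are from being independent. -/
noncomputable def sliceCovariance (S : Y → Y) (ν : Measure Y) (A : Set (X × Y)) (V : Set Y) (n : ℕ)
    (x : X) : ℝ :=
  ν.real (V ∩ S^[n] ⁻¹' (Prod.mk x ⁻¹' A)) - ν.real V * ν.real (Prod.mk x ⁻¹' A)

theorem measurable_sliceCovariance [SFinite ν] (hS : Measurable S) (hA : MeasurableSet A)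
    {V : Set Y} (hV : MeasurableSet V) (n : ℕ) : Measurable (sliceCovariance S ν A V n) :=
  (measurable_measure_prodMk_left ((measurable_snd hV).inter
    ((measurable_id.prodMap (hS.iterate n)) hA))).ennreal_toReal.sub
    ((measurable_measure_prodMk_left hA).ennreal_toReal.const_mul _)

omit [MeasurableSpace X] in
theorem abs_sliceCovariance_le_one [IsProbabilityMeasure ν] (V : Set Y) (n : ℕ) (x : X) :
    |sliceCovariance S ν A V n x| ≤ 1 :=
  abs_sub_le_of_nonneg_of_le measureReal_nonneg measureReal_le_one
    (mul_nonneg measureReal_nonneg measureReal_nonneg)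
    (mul_le_one₀ measureReal_le_one measureReal_nonneg measureReal_le_one)

theorem IsMixing.tendsto_integral_abs_sliceCovariance [IsFiniteMeasure μ]
    [IsProbabilityMeasure ν] (hS : IsMixing S ν) (hA : MeasurableSet A) {V : Set Y}
    (hV : MeasurableSet V) :
    Tendsto (fun n => ∫ x, |sliceCovariance S ν A V n x| ∂μ) atTop (𝓝 0) := by
  rw [← integral_zero X ℝ (μ := μ)]
  refine tendsto_integral_of_dominated_convergence (fun _ => 1)
    (fun n => (measurable_sliceCovariance hS.measurable hA hV n).abs.aestronglyMeasurable)
    (integrable_const _) (fun n => .of_forall fun x => ?_) (.of_forall fun x => ?_)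
  · simpa only [Real.norm_eq_abs, abs_abs] using abs_sliceCovariance_le_one V n x
  · have hmix := hS.tendsto_measureReal_inter_preimage_iterate hV
      (measurable_prodMk_left (x := x) hA)
    simpa only [sliceCovariance, sub_self, abs_zero] using
      (hmix.sub_const (ν.real V * ν.real (Prod.mk x ⁻¹' A))).abs

theorem measureReal_slice_map_eq (hS : MeasurePreserving S ν ν) (hA : MeasurableSet A)
    (hinv : Prod.map T S ⁻¹' A = A) (x : X) :
    ν.real (Prod.mk (T x) ⁻¹' A) = ν.real (Prod.mk x ⁻¹' A) :=
  calc ν.real (Prod.mk (T x) ⁻¹' A)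
      = ν.real (S ⁻¹' (Prod.mk (T x) ⁻¹' A)) :=
        (hS.measureReal_preimage (measurable_prodMk_left hA).nullMeasurableSet).symm
    _ = ν.real (Prod.mk x ⁻¹' (Prod.map T S ⁻¹' A)) := rfl
    _ = ν.real (Prod.mk x ⁻¹' A) := by rw [hinv]

theorem sliceCovariance_iterate (hS : MeasurePreserving S ν ν) (hA : MeasurableSet A)
    (hinv : Prod.map T S ⁻¹' A = A) (V : Set Y) (n : ℕ) (x : X) :
    sliceCovariance S ν A V n (T^[n] x) = sliceCovariance S ν A V 0 x := by
  have hinv_n : Prod.map T^[n] S^[n] ⁻¹' A = A := by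
    rw [← Prod.map_iterate, Function.IsFixedPt.preimage_iterate hinv n]
  have hslice : S^[n] ⁻¹' (Prod.mk (T^[n] x) ⁻¹' A) = Prod.mk x ⁻¹' A :=
    congrArg (Prod.mk x ⁻¹' ·) hinv_n
  simp only [sliceCovariance, hslice, measureReal_slice_map_eq (hS.iterate n) hA hinv_n,
    Function.iterate_zero, preimage_id]

theorem ae_measureReal_inter_slice_eq_mul [IsFiniteMeasure μ] [IsProbabilityMeasure ν]
    (hT : MeasurePreserving T μ μ) (hS : IsMixing S ν) (hA : MeasurableSet A)
    (hinv : Prod.map T S ⁻¹' A = A) {V : Set Y} (hV : MeasurableSet V) :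
    ∀ᵐ x ∂μ, ν.real (V ∩ Prod.mk x ⁻¹' A) = ν.real V * ν.real (Prod.mk x ⁻¹' A) := by
  have hmeas := measurable_sliceCovariance (ν := ν) hS.measurable hA hV
  have hint (n : ℕ) :
      ∫ x, |sliceCovariance S ν A V n x| ∂μ = ∫ x, |sliceCovariance S ν A V 0 x| ∂μ :=
    calc ∫ x, |sliceCovariance S ν A V n x| ∂μ
        = ∫ x, |sliceCovariance S ν A V n x| ∂μ.map T^[n] := by rw [(hT.iterate n).map_eq]
      _ = ∫ x, |sliceCovariance S ν A V n (T^[n] x)| ∂μ :=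
        integral_map (hT.iterate n).measurable.aemeasurable (hmeas n).abs.aestronglyMeasurable
      _ = ∫ x, |sliceCovariance S ν A V 0 x| ∂μ := by
        simp only [sliceCovariance_iterate hS.toMeasurePreserving hA hinv]
  have hzero : ∫ x, |sliceCovariance S ν A V 0 x| ∂μ = 0 :=
    tendsto_nhds_unique tendsto_const_nhds
      (by simpa only [hint] using hS.tendsto_integral_abs_sliceCovariance (μ := μ) hA hV)
  have hintegrable : Integrable (fun x => |sliceCovariance S ν A V 0 x|) μ :=
    (Integrable.of_bound (hmeas 0).aestronglyMeasurable 1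
      (.of_forall (abs_sliceCovariance_le_one V 0))).abs
  filter_upwards [(integral_eq_zero_iff_of_nonneg (fun x => abs_nonneg _) hintegrable).1 hzero]
    with x hx
  exact sub_eq_zero.1 (abs_eq_zero.1 hx)

theorem measureReal_prod_inter_rect_eq_mul [IsProbabilityMeasure μ] [IsProbabilityMeasure ν]
    (hT : Ergodic T μ) (hS : IsMixing S ν) (hA : MeasurableSet A)
    (hinv : Prod.map T S ⁻¹' A = A) (U : Set X) {V : Set Y} (hV : MeasurableSet V) :
    (μ.prod ν).real (A ∩ U ×ˢ V) = (μ.prod ν).real A * (μ.prod ν).real (U ×ˢ V) := by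
  obtain ⟨c, hc⟩ : ∃ c, (fun x => ν.real (Prod.mk x ⁻¹' A)) =ᵐ[μ] Function.const X c :=
    hT.toPreErgodic.ae_eq_const_of_ae_eq_comp
      (measurable_measure_prodMk_left hA).ennreal_toReal
      (funext fun x => measureReal_slice_map_eq hS.toMeasurePreserving hA hinv x)
  have hslice : ∀ᵐ x ∂μ, ν.real (Prod.mk x ⁻¹' A ∩ V) = c * ν.real V := by
    filter_upwards [hc, ae_measureReal_inter_slice_eq_mul hT.toMeasurePreserving hS hA hinv hV]
      with x hxc hx
    rw [inter_comm, hx, mul_comm, hxc, Function.const_apply]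
  have hcA : (μ.prod ν).real A = c := by
    rw [measureReal_prod_eq_integral hA, integral_congr_ae hc]
    simp
  rw [measureReal_prod_inter_prod_eq_setIntegral hA, integral_congr_ae (ae_restrict_of_ae hslice),
    hcA, measureReal_prod_prod]
  simp [mul_left_comm]

theorem ergodic_prodMap_of_isMixing [IsProbabilityMeasure μ] [IsProbabilityMeasure ν]
    (hT : Ergodic T μ) (hS : IsMixing S ν) : Ergodic (Prod.map T S) (μ.prod ν) where
  toMeasurePreserving := hT.toMeasurePreserving.prod hS.toMeasurePreserving
  aeconst_set A hA hinv := by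
    have hrestrict : (μ.prod ν).restrict A = μ.prod ν A • μ.prod ν := by
      refine Measure.ext_prod fun {U V} hU hV => ?_
      have hreal := measureReal_prod_inter_rect_eq_mul hT hS hA hinv U hV
      rw [Measure.restrict_apply (hU.prod hV), inter_comm, Measure.smul_apply, smul_eq_mul]
      refine (ENNReal.toReal_eq_toReal_iff' (by finiteness) (by finiteness)).1 ?_
      rwa [ENNReal.toReal_mul]
    have hindep : IndepSet A A (μ.prod ν) := (indepSet_iff_measure_inter_eq_mul hA hA _).2 <| by
      rw [← Measure.restrict_apply hA, hrestrict, Measure.smul_apply, smul_eq_mul]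
    rw [eventuallyConst_set', ae_eq_empty, ae_eq_univ, prob_compl_eq_zero_iff hA]
    exact measure_eq_zero_or_one_of_indepSet_self hindep

end Product

section FullShift

theorem fullShift_iterate_apply {α : Type*} (n : ℕ) (x : ℤ → α) (i : ℤ) :
    fullShift^[n] x i = x (i - n) := by
  induction n generalizing i with
  | zero => simp only [Function.iterate_zero, id, Nat.cast_zero, sub_zero]
  | succ n ih =>
    rw [Function.iterate_succ_apply', fullShift, ih, sub_sub, add_comm, Nat.cast_succ]

theorem measurable_fullShift {α : Type*} [MeasurableSpace α] :
    Measurable (fullShift : (ℤ → α) → ℤ → α) :=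
  measurable_pi_lambda _ fun i => measurable_pi_apply (i - 1)

end FullShift

section Bernoulli

variable {F : Type*} [MeasurableSpace F] (p : Measure F) [IsProbabilityMeasure p]

theorem measurePreserving_fullShift_infinitePi :
    MeasurePreserving fullShift (Measure.infinitePi fun _ : ℤ => p)
      (Measure.infinitePi fun _ : ℤ => p) :=
  ⟨measurable_fullShift, Measure.map_infinitePi_infinitePi_of_inj sub_left_injective⟩

theorem eventually_disjoint_image_sub (I J : Finset ℤ) :
    ∀ᶠ n : ℕ in atTop, Disjoint I (J.image (· - (n : ℤ))) := by
  simp only [Finset.disjoint_left, Finset.mem_image, not_exists, not_and]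
  refine (Filter.eventually_all_finset I).2 fun i _ =>
    (Filter.eventually_all_finset J).2 fun j _ => ?_
  filter_upwards [eventually_gt_atTop (j - i).toNat] with n hn
  omega

theorem indepFun_restrict_fullShift_iterate {I J : Finset ℤ} {n : ℕ}
    (h : Disjoint I (J.image (· - (n : ℤ)))) :
    IndepFun I.restrict (J.restrict ∘ fullShift^[n]) (Measure.infinitePi fun _ : ℤ => p) := by
  have hindep := (iIndepFun_infinitePi (P := fun _ : ℤ => p) (X := fun _ => id)
    (fun _ => measurable_id)).indepFun_finset _ _ h fun _ => by fun_prop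
  let reindex (w : J.image (· - (n : ℤ)) → F) (j : J) : F :=
    w ⟨j - n, Finset.mem_image_of_mem _ j.2⟩
  have hreindex : Measurable reindex := measurable_pi_lambda _ fun j => measurable_pi_apply _
  have hreindex_comp : J.restrict ∘ fullShift^[n] =
      reindex ∘ (J.image (· - (n : ℤ))).restrict (π := fun _ => F) :=
    funext₂ fun x j => fullShift_iterate_apply n x j
  rw [hreindex_comp]
  exact hindep.comp measurable_id hreindex

theorem isMixing_fullShift_infinitePi :
    IsMixing fullShift (Measure.infinitePi fun _ : ℤ => p) := by
  have hshift := measurePreserving_fullShift_infinitePi p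
  refine .of_isPiSystem hshift (generateFrom_measurableCylinders (α := fun _ : ℤ => F)).symm
    isPiSystem_measurableCylinders fun s hs t ht => tendsto_const_nhds.congr' ?_
  have ht' := MeasurableSet.of_mem_measurableCylinders ht
  obtain ⟨I, B, hB, rfl⟩ := (mem_measurableCylinders _).1 hs
  obtain ⟨J, C, hC, rfl⟩ := (mem_measurableCylinders _).1 ht
  filter_upwards [eventually_disjoint_image_sub I J] with n hn
  have hindep := (indepFun_restrict_fullShift_iterate p hn).measure_inter_preimage_eq_mul B C hB hC
  rw [← (hshift.iterate n).measureReal_preimage ht'.nullMeasurableSet]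
  exact (ENNReal.toReal_mul.symm.trans (congrArg ENNReal.toReal hindep.symm))

end Bernoulli

section Entropy

variable {X Y : Type*} [MeasurableSpace X] [MeasurableSpace Y] {T : X → X} {S : Y → Y}
  {μ : Measure X} {ν : Measure Y}

theorem partitionEntropy_eq_log_card {ι : Type*} [Fintype ι] {f : X → ι}
    (hf : ∀ c, μ (f ⁻¹' {c}) = (Fintype.card ι : ℝ≥0∞)⁻¹) :
    partitionEntropy μ f = Real.log (Fintype.card ι) := by
  simp only [partitionEntropy, hf, ENNReal.toReal_inv, ENNReal.toReal_natCast, Finset.sum_const,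
    Finset.card_univ, nsmul_eq_mul, Real.negMulLog, Real.log_inv, neg_mul_neg]
  rcases eq_or_ne (Fintype.card ι : ℝ) 0 with h | h
  · simp [h]
  · rw [mul_inv_cancel_left₀ h]

theorem kolmogorovSinaiEntropy_le_of_semiconj {π : X → Y} (hπ : MeasurePreserving π μ ν)
    (hS : Measurable S) (h : Function.Semiconj π T S) :
    kolmogorovSinaiEntropy S ν ≤ kolmogorovSinaiEntropy T μ := by
  refine iSup_le fun k => iSup_le fun f => iSup_le fun hf =>
    le_iSup_of_le k <| le_iSup_of_le (f ∘ π) <| le_iSup_of_le (hf.comp hπ.measurable) ?_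
  have hcode (n : ℕ) : Measurable fun y (i : Fin n) => f (S^[(i : ℕ)] y) :=
    measurable_pi_lambda _ fun i => hf.comp (hS.iterate i)
  have hentropy (n : ℕ) : partitionEntropy μ (fun x (i : Fin n) => (f ∘ π) (T^[(i : ℕ)] x)) =
      partitionEntropy ν fun y (i : Fin n) => f (S^[(i : ℕ)] y) := by
    simp only [partitionEntropy,
      ← hπ.measure_preimage (hcode n (measurableSet_singleton _)).nullMeasurableSet]
    simp only [← preimage_comp, Function.comp_def, fun i x => (h.iterate_right i).eq x]
  simp only [hentropy, le_refl]

theorem infinitePi_uniformOn_fullShift_itinerary {ι : Type*} [Fintype ι] [Nonempty ι]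
    [MeasurableSpace ι] [MeasurableSingletonClass ι] (n : ℕ) (c : Fin n → ι) :
    Measure.infinitePi (fun _ : ℤ => uniformOn (univ : Set ι))
      ((fun x (i : Fin n) => fullShift^[(i : ℕ)] x 0) ⁻¹' {c}) =
      (Fintype.card (Fin n → ι) : ℝ≥0∞)⁻¹ := by
  have hinj : Function.Injective fun i : Fin n => -((i : ℕ) : ℤ) :=
    neg_injective.comp (Nat.cast_injective.comp Fin.val_injective)
  simp only [fullShift_iterate_apply, zero_sub]
  rw [← Measure.map_apply (by fun_prop) (measurableSet_singleton c),
    Measure.map_infinitePi_infinitePi_of_inj hinj, Measure.infinitePi_singleton_of_fintype]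
  simp [uniformOn_univ, ENNReal.inv_pow]

theorem log_card_le_kolmogorovSinaiEntropy_fullShift (N : ℕ) [NeZero N] :
    ENNReal.ofReal (Real.log N) ≤
      kolmogorovSinaiEntropy fullShift
        (Measure.infinitePi fun _ : ℤ => uniformOn (univ : Set (Fin N))) := by
  refine le_iSup_of_le N <| le_iSup_of_le (Function.eval 0) <|
    le_iSup_of_le (measurable_pi_apply 0) <| ENNReal.ofReal_le_ofReal <| ?_
  refine (Tendsto.liminf_eq (tendsto_const_nhds.congr' ?_)).ge
  filter_upwards [eventually_gt_atTop 0] with n hn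
  rw [partitionEntropy_eq_log_card (infinitePi_uniformOn_fullShift_itinerary n)]
  have : (n : ℝ) ≠ 0 := by positivity
  simp [mul_div_cancel_left₀, this]

end Entropy

section Encoding

theorem exists_injective_forall_mem {ι α : Type*} [Countable ι] {s : ι → Set α}
    (hs : ∀ i, (s i).Infinite) : ∃ f : ι → α, Function.Injective f ∧ ∀ i, f i ∈ s i := by
  classical
  have := Encodable.ofCountable ι
  choose t hts hcard using fun i => (hs i).exists_subset_card_eq (Encodable.encode i + 1)
  obtain ⟨f, hf, hft⟩ := (Finset.all_card_le_biUnion_card_iff_exists_injective t).1 fun I => by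
    rcases I.eq_empty_or_nonempty with rfl | hI
    · simp
    · obtain ⟨i, hi, hmax⟩ := I.exists_max_image Encodable.encode hI
      calc I.card = (I.image Encodable.encode).card :=
            (Finset.card_image_of_injective I Encodable.encode_injective).symm
        _ ≤ (Finset.range (Encodable.encode i + 1)).card :=
            Finset.card_le_card fun n hn => by
              obtain ⟨j, hj, rfl⟩ := Finset.mem_image.1 hn
              exact Finset.mem_range_succ_iff.2 (hmax j hj)
        _ = (t i).card := by rw [Finset.card_range, hcard]
        _ ≤ (I.biUnion t).card := Finset.card_le_card (Finset.subset_biUnion_of_mem t hi)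
  exact ⟨f, hf, fun i => hts i (hft i)⟩

variable {M F : Type*} [MeasurableSpace M]

theorem exists_measurable_dist_denseSeq_lt [PseudoMetricSpace M]
    [TopologicalSpace.SeparableSpace M] [OpensMeasurableSpace M] [Nonempty M] {ε : ℝ}
    (hε : 0 < ε) :
    ∃ j : M → ℕ, Measurable j ∧ ∀ x, dist (TopologicalSpace.denseSeq M (j x)) x < ε := by
  have hdense (x : M) : ∃ n, dist (TopologicalSpace.denseSeq M n) x < ε := by
    simpa only [dist_comm x] using
      (TopologicalSpace.denseRange_denseSeq M).exists_dist_lt x hε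
  refine ⟨fun x => Nat.find (hdense x), ?_, fun x => Nat.find_spec (hdense x)⟩
  exact measurable_find hdense fun n => measurableSet_lt (by fun_prop) measurable_const

theorem exists_measurable_nearby_encoding [MetricSpace M] [TopologicalSpace.SeparableSpace M]
    [PerfectSpace M] [BorelSpace M] [Nonempty M] [MeasurableSpace F] [Countable F] [Nonempty F]
    [MeasurableSingletonClass F] {ε : ℝ} (hε : 0 < ε) :
    ∃ (φ : M × F → M) (g : M → F), Measurable φ ∧ Measurable g ∧
      (∀ z, dist (φ z) z.1 < ε) ∧ ∀ z, g (φ z) = z.2 := by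
  obtain ⟨j, hj, hjε⟩ := exists_measurable_dist_denseSeq_lt (M := M) (half_pos hε)
  -- `p (n, c)` lies near the `n`-th dense point, and `p` is injective so that it determines `c`.
  obtain ⟨p, hp, hpε⟩ := exists_injective_forall_mem
    (s := fun nc : ℕ × F => ball (TopologicalSpace.denseSeq M nc.1) (ε / 2))
    fun nc => infinite_of_mem_nhds _ (ball_mem_nhds _ (half_pos hε))
  refine ⟨fun z => p (j z.1, z.2),
    Function.extend p Prod.snd fun _ => Classical.arbitrary F, ?_, ?_, fun z => ?_, fun z => ?_⟩
  · exact (measurable_of_countable p).comp (by fun_prop)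
  · refine (measurable_const (a := Classical.arbitrary F)).measurable_of_countable_ne
      ((countable_range p).mono fun x hx => of_not_not fun hxp => hx ?_)
    rw [Function.extend_apply' _ _ _ hxp]
  · calc dist (p (j z.1, z.2)) z.1
        ≤ dist (p (j z.1, z.2)) (TopologicalSpace.denseSeq M (j z.1)) +
          dist (TopologicalSpace.denseSeq M (j z.1)) z.1 := dist_triangle _ _ _
      _ < ε / 2 + ε / 2 := add_lt_add (hpε _) (hjε _)
      _ = ε := add_halves ε
  · exact hp.extend_apply _ _ _

end Encoding

section CoordinatewiseMap

variable {ι α β γ : Type*}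

/-- The map `(x, y) ↦ (φ (x i, y i))ᵢ` on pairs of sequences that applies `φ` in each coordinate. -/
def coordinatewise (φ : α × β → γ) (z : (ι → α) × (ι → β)) : ι → γ := fun i => φ (z.1 i, z.2 i)

theorem measurable_coordinatewise [MeasurableSpace α] [MeasurableSpace β] [MeasurableSpace γ]
    {φ : α × β → γ} (hφ : Measurable φ) :
    Measurable (coordinatewise φ : (ι → α) × (ι → β) → ι → γ) :=
  measurable_pi_lambda _ fun i => hφ.comp (by fun_prop)

theorem semiconj_coordinatewise_fullShift (φ : α × β → γ) :
    Function.Semiconj (coordinatewise φ) (Prod.map fullShift fullShift) fullShift :=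
  fun _ => rfl

end CoordinatewiseMap

section Perturbation

variable {ι α β : Type*} [MeasurableSpace α] [MeasurableSpace β] {φ : α × β → α} {g : α → β}

/-- The law of `(φ (x i, y i))ᵢ`, where the sequence `x` has law `μ` and the independent noise `y`
has law `κ`. -/
noncomputable def perturb (μ : ProbabilityMeasure (ι → α)) (κ : ProbabilityMeasure (ι → β))
    (hφ : Measurable φ) : ProbabilityMeasure (ι → α) :=
  (μ.prod κ).map (measurable_coordinatewise hφ).aemeasurable

theorem tendsto_perturb [TopologicalSpace α] [OpensMeasurableSpace (ι → α)]
    (μ : ProbabilityMeasure (ι → α)) (κ : ProbabilityMeasure (ι → β)) {φ : ℕ → α × β → α}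
    (hφ : ∀ k, Measurable (φ k)) (hlim : ∀ z, Tendsto (φ · z) atTop (𝓝 z.1)) :
    Tendsto (fun k => perturb μ κ (hφ k)) atTop (𝓝 μ) := by
  have hdistrib : TendstoInDistribution (fun k => coordinatewise (φ k)) atTop Prod.fst
      (fun _ => (μ.prod κ).toMeasure) (μ.prod κ).toMeasure :=
    tendstoInDistribution_of_ae_tendsto
      (fun k => (measurable_coordinatewise (hφ k)).aemeasurable) measurable_fst.aemeasurable
      (.of_forall fun z => tendsto_pi_nhds.2 fun i => hlim (z.1 i, z.2 i))
  have hlimit : Tendsto (fun k => perturb μ κ (hφ k)) atTop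
      (𝓝 ((μ.prod κ).map measurable_fst.aemeasurable)) := hdistrib.tendsto
  rwa [ProbabilityMeasure.map_fst_prod] at hlimit

variable {μ : ProbabilityMeasure (ℤ → α)} {κ : ProbabilityMeasure (ℤ → β)}

theorem ergodic_perturb (hμ : Ergodic fullShift (μ : Measure (ℤ → α)))
    (hκ : IsMixing fullShift (κ : Measure (ℤ → β))) (hφ : Measurable φ) :
    Ergodic fullShift (perturb μ κ hφ : Measure (ℤ → α)) :=
  ((measurable_coordinatewise hφ).measurePreserving _).ergodic_of_ergodic_semiconj
    (ergodic_prodMap_of_isMixing hμ hκ) measurable_fullShift (semiconj_coordinatewise_fullShift φ)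

theorem kolmogorovSinaiEntropy_le_perturb (hφ : Measurable φ) (hg : Measurable g)
    (hgφ : ∀ z, g (φ z) = z.2) :
    kolmogorovSinaiEntropy fullShift (κ : Measure (ℤ → β)) ≤
      kolmogorovSinaiEntropy fullShift (perturb μ κ hφ : Measure (ℤ → α)) := by
  have hdecode : Measurable fun y : ℤ → α => g ∘ y :=
    measurable_pi_lambda _ fun i => hg.comp (measurable_pi_apply i)
  refine kolmogorovSinaiEntropy_le_of_semiconj ⟨hdecode, ?_⟩ measurable_fullShift fun _ => rfl
  have hdecode_comp : (fun y : ℤ → α => g ∘ y) ∘ coordinatewise φ = Prod.snd :=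
    funext₂ fun z i => hgφ (z.1 i, z.2 i)
  calc (perturb μ κ hφ : Measure (ℤ → α)).map (fun y => g ∘ y)
      = ((μ : Measure (ℤ → α)).prod (κ : Measure (ℤ → β))).map Prod.snd := by
        rw [← hdecode_comp]
        exact Measure.map_map hdecode (measurable_coordinatewise hφ)
    _ = κ := by rw [Measure.map_snd_prod, measure_univ, one_smul]

theorem exists_seq_ergodic_tendsto_of_isMixing {M F : Type*} [MetricSpace M]
    [TopologicalSpace.SeparableSpace M] [PerfectSpace M] [MeasurableSpace M] [BorelSpace M]
    [MeasurableSpace F] [Countable F] [MeasurableSingletonClass F]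
    {μ : ProbabilityMeasure (ℤ → M)} (hμ : Ergodic fullShift (μ : Measure (ℤ → M)))
    {κ : ProbabilityMeasure (ℤ → F)} (hκ : IsMixing fullShift (κ : Measure (ℤ → F))) :
    ∃ ν : ℕ → ProbabilityMeasure (ℤ → M),
      (∀ k, Ergodic fullShift (ν k : Measure (ℤ → M)) ∧
        kolmogorovSinaiEntropy fullShift (κ : Measure (ℤ → F)) ≤
          kolmogorovSinaiEntropy fullShift (ν k : Measure (ℤ → M))) ∧
      Tendsto ν atTop (𝓝 μ) := by
  have : SecondCountableTopology M := UniformSpace.secondCountable_of_separable M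
  have : Nonempty M := (μ : Measure (ℤ → M)).nonempty_of_neZero.map (· 0)
  have : Nonempty F := (κ : Measure (ℤ → F)).nonempty_of_neZero.map (· 0)
  obtain ⟨ε, -, hε, hε_lim⟩ := exists_seq_strictAnti_tendsto (0 : ℝ)
  choose φ g hφ hg hφε hgφ using
    fun k => exists_measurable_nearby_encoding (M := M) (F := F) (hε k)
  have hlim (z : M × F) : Tendsto (φ · z) atTop (𝓝 z.1) :=
    tendsto_iff_dist_tendsto_zero.2 <|
      squeeze_zero (fun _ => dist_nonneg) (fun k => (hφε k z).le) hε_lim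
  exact ⟨fun k => perturb μ κ (hφ k), fun k => ⟨ergodic_perturb hμ hκ (hφ k),
    kolmogorovSinaiEntropy_le_perturb (hφ k) (hg k) (hgφ k)⟩, tendsto_perturb μ κ hφ hlim⟩

end Perturbation

theorem fullShift_largeEntropy_dense_general {M : Type*} [TopologicalSpace M] [T3Space M]
    [SecondCountableTopology M] [PerfectSpace M] [MeasurableSpace M] [BorelSpace M] (L : ℝ) :
    Dense {μ : {ν : ProbabilityMeasure (ℤ → M) // Ergodic fullShift ν.toMeasure} |
        ENNReal.ofReal L ≤ kolmogorovSinaiEntropy fullShift μ.1.toMeasure} := by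
  let _ := TopologicalSpace.metrizableSpaceMetric M
  intro μ
  obtain ⟨N, hN⟩ := exists_nat_ge (Real.exp L)
  have hN_pos : (0 : ℝ) < N := (Real.exp_pos L).trans_le hN
  have : NeZero N := ⟨Nat.cast_ne_zero.1 hN_pos.ne'⟩
  let p : Measure (Fin N) := uniformOn univ
  obtain ⟨ν, hν, hlim⟩ := exists_seq_ergodic_tendsto_of_isMixing
    (κ := ⟨Measure.infinitePi fun _ => p, inferInstance⟩) μ.2 (isMixing_fullShift_infinitePi p)
  refine mem_closure_of_tendsto (f := fun k => ⟨ν k, (hν k).1⟩) (tendsto_subtype_rng.2 hlim)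
    (.of_forall fun k => ?_)
  calc ENNReal.ofReal L
      ≤ ENNReal.ofReal (Real.log N) :=
        ENNReal.ofReal_le_ofReal ((Real.le_log_iff_exp_le hN_pos).2 hN)
    _ ≤ kolmogorovSinaiEntropy fullShift (Measure.infinitePi fun _ : ℤ => p) :=
        log_card_le_kolmogorovSinaiEntropy_fullShift N
    _ ≤ kolmogorovSinaiEntropy fullShift (ν k : Measure (ℤ → M)) := (hν k).2

/-- For the full shift on `ℤ → M` over a perfect Polish metric space `M`,
for every `L > 0` the set of ergodic invariant measures with metric entropy at least `L` is
dense in `M_e` (with the topology induced by the weak topology). -/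
theorem fullShift_largeEntropy_dense {M : Type*} [MetricSpace M] [CompleteSpace M]
    [TopologicalSpace.SeparableSpace M] [PerfectSpace M]
    [MeasurableSpace M] [BorelSpace M] (L : ℝ) (hL : 0 < L) :
    Dense {μ : {ν : ProbabilityMeasure (ℤ → M) // Ergodic fullShift ν.toMeasure} |
        ENNReal.ofReal L ≤ kolmogorovSinaiEntropy fullShift μ.1.toMeasure} := by
  have := UniformSpace.secondCountable_of_separable M
  exact fullShift_largeEntropy_dense_general L
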